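/- Let K be a number field and let S be a subset of M containing infinitely many ideals with |S(x^{1/2})| = o(|S(x)|) as x → ∞. Suppose there exist a constant β with 0 < β ≤ 1, a function y = y(x) with 1 < y(x) < x^β, and real constants λ_p for each prime ideal p (with e_p(x) and e_{p_1⋯p_u}(x) defined by the density relations) such that: (a) for each m ∈ S(x), the number of prime ideals p with N(p) > x^β and p | m is O_β(1); (b) Σ_{y < N(p) ≤ x^β} λ_p = o((log log x)^{1/2}); (c) Σ_{y < N(p) ≤ x^β} |e_p(x)| = o((log log x)^{1/2}); (d) Σ_{N(p) ≤ y} λ_p = log log x + o((log log x)^{1/2}); (e) Σ_{N(p) ≤ y} λ_p^2 = o((log log x)^{1/2}); (f) for every r ∈ ℕ and every integer u with 1 ≤ u ≤ r, the sum of |e_{p_1⋯p_u}(x)| over all u-tuples (p_1, …, p_u) of distinct prime ideals with N(p_i) ≤ y for all i is o((log log x)^{-r/2}). Then for every γ ∈ ℝ, lim_{x → ∞} (1/|S(x)|) · |{m ∈ S(x) : N(m) ≥ 3, (ω(m) − log log N(m)) / √(log log N(m)) ≤ γ}| = Φ(γ). -/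

import Mathlib

open Filter MeasureTheory Topology
open scoped BigOperators

noncomputable section

variable (K : Type) [Field K] [NumberField K]

/-- The standard Gaussian distribution function Φ. -/
def gaussPhi (γ : ℝ) : ℝ :=
  (Real.sqrt (2 * Real.pi))⁻¹ * ∫ u in Set.Iic γ, Real.exp (-u ^ 2 / 2)

/-- Number of distinct prime ideal divisors of an ideal. -/
def omegaI (m : Ideal (NumberField.RingOfIntegers K)) : ℕ :=
  Nat.card {p : Ideal (NumberField.RingOfIntegers K) // p.IsPrime ∧ p ∣ m}

/-- The number of elements of `S` with norm at most `x`. -/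
def countS (S : Set (Ideal (NumberField.RingOfIntegers K))) (x : ℝ) : ℕ :=
  Nat.card {m : Ideal (NumberField.RingOfIntegers K) //
    m ∈ S ∧ (Ideal.absNorm m : ℝ) ≤ x}

/-!
Write `L = log log x`, let `Q` be the set of primes of norm at most `y x`, and compare the number of
`p ∈ Q` dividing a uniformly random element of `S(x)` with the number of successes in independent
trials of parameters `λ_p`, `p ∈ Q`; the `λ_p` lie in `[0, 1]` because each of them is a limit of
proportions. By (f) the binomial moments of the two counts differ by less than every power of
`L⁻¹`, hence the moments of the counts centred at `L` and scaled by `√L` have the same limits.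
As the normalized number of successes has uniformly bounded exponential moments, the characteristic
functions of the two normalized counts also have the same limits. By Le Cam's inequality and (e)
the number of successes is close to a Poisson variable of the same mean, whose normalized
characteristic function tends to `exp (-t² / 2)`, and Lévy's continuity theorem gives the Gaussian
limit for the primes in `Q`. Finally, (a), (b), (c) and Markov's inequality show that the remaining
primes contribute `o(√L)` to `ω(m)` outside a negligible set, and `L - 1 ≤ log log N(m) ≤ L` as soon
as `√x ≤ N(m) ≤ x`, which leaves out the negligible `S(√x)`.
-/

/-- The error of the Taylor polynomial of degree `n - 1` of the complex exponential at `0`. -/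
def expRemainder (n : ℕ) (z : ℂ) : ℂ :=
  Complex.exp z - ∑ k ∈ Finset.range n, z ^ k / k.factorial

theorem expRemainder_succ (n : ℕ) :
    expRemainder (n + 1) = expRemainder n - fun z ↦ z ^ n / (n.factorial : ℂ) := by
  funext z
  simp only [expRemainder, Finset.sum_range_succ, sub_add_eq_sub_sub, Pi.sub_apply]

theorem hasDerivAt_expRemainder_succ (n : ℕ) (z : ℂ) :
    HasDerivAt (expRemainder (n + 1)) (expRemainder n z) z := by
  induction n with
  | zero =>
    have hone : expRemainder 1 = fun w ↦ Complex.exp w - 1 := by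
      funext w
      simp [expRemainder]
    simpa [hone, expRemainder] using (Complex.hasDerivAt_exp z).sub_const 1
  | succ n ih =>
    have hmonomial : HasDerivAt (fun w : ℂ ↦ w ^ (n + 1) / ((n + 1).factorial : ℂ))
        (z ^ n / n.factorial) z := by
      refine ((hasDerivAt_pow (n + 1) z).div_const _).congr_deriv ?_
      have : (n.factorial : ℂ) ≠ 0 := mod_cast n.factorial_ne_zero
      have : (n : ℂ) + 1 ≠ 0 := n.cast_add_one_ne_zero
      simp only [Nat.factorial_succ, Nat.cast_mul, Nat.cast_add_one, Nat.add_sub_cancel]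
      field_simp
    rw [expRemainder_succ (n + 1)]
    exact (ih.sub hmonomial).congr_deriv (by rw [expRemainder_succ n, Pi.sub_apply])

theorem norm_expRemainder_le_of_re_nonpos (n : ℕ) {z : ℂ} (hz : z.re ≤ 0) :
    ‖expRemainder n z‖ ≤ ‖z‖ ^ n / n.factorial := by
  induction n generalizing z with
  | zero => simpa [expRemainder, Complex.norm_exp] using hz
  | succ n ih =>
    have hpath (s : ℝ) : HasDerivAt (fun s : ℝ ↦ expRemainder (n + 1) (s * z))
        (expRemainder n (s * z) * z) s := by
      have hinner : HasDerivAt (fun s : ℝ ↦ (s : ℂ) * z) z s := by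
        simpa using (Complex.ofRealCLM.hasDerivAt (x := s)).mul_const z
      exact (hasDerivAt_expRemainder_succ n (s * z)).comp s hinner
    have hbound (s : ℝ) :
        HasDerivAt (fun s : ℝ ↦ s ^ (n + 1) * (‖z‖ ^ (n + 1) / (n + 1).factorial))
        (s ^ n * (‖z‖ ^ n / n.factorial) * ‖z‖) s := by
      refine ((hasDerivAt_pow (n + 1) s).mul_const _).congr_deriv ?_
      have : (n : ℝ) + 1 ≠ 0 := n.cast_add_one_ne_zero
      simp only [Nat.factorial_succ, Nat.cast_mul, Nat.cast_add_one, Nat.add_sub_cancel]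
      field_simp
      ring
    have hderiv_le (s : ℝ) (hs : s ∈ Set.Ico (0 : ℝ) 1) :
        ‖expRemainder n (s * z) * z‖ ≤ s ^ n * (‖z‖ ^ n / n.factorial) * ‖z‖ := by
      have hre : ((s : ℂ) * z).re ≤ 0 := by
        simpa using mul_nonpos_of_nonneg_of_nonpos hs.1 hz
      rw [norm_mul]
      gcongr
      refine (ih hre).trans_eq ?_
      rw [norm_mul, Complex.norm_of_nonneg hs.1, mul_pow, mul_div_assoc]
    simpa using image_norm_le_of_norm_deriv_right_le_deriv_boundary
      (fun s _ ↦ (hpath s).continuousAt.continuousWithinAt)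
      (fun s _ ↦ (hpath s).hasDerivWithinAt)
      (by simp [expRemainder, Finset.sum_range_succ']) hbound hderiv_le
      (Set.right_mem_Icc.2 zero_le_one)

theorem norm_charFun_sub_sum_moments_le {μ : Measure ℝ} [IsFiniteMeasure μ] {n : ℕ}
    (hμ : MemLp id n μ) (t : ℝ) :
    ‖charFun μ t - ∑ k ∈ Finset.range n, (t * Complex.I) ^ k / k.factorial * ↑(∫ x, x ^ k ∂μ)‖ ≤
      |t| ^ n / n.factorial * ∫ x, |x| ^ n ∂μ := by
  have hpow : ∀ k ∈ Finset.range n, Integrable (fun x : ℝ ↦ x ^ k) μ := fun k hk ↦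
    (hμ.mono_exponent (mod_cast (Finset.mem_range.1 hk).le)).integrable_norm_pow'.mono
      (by fun_prop) (by simp)
  have hterm : ∀ k ∈ Finset.range n, Integrable
      (fun x : ℝ ↦ (t * x * Complex.I : ℂ) ^ k / k.factorial) μ := fun k hk ↦ by
    refine (((hpow k hk).ofReal (𝕜 := ℂ)).const_mul ((t * Complex.I) ^ k / k.factorial)).congr
      (.of_forall fun x ↦ ?_)
    change (t * Complex.I) ^ k / k.factorial * ((x ^ k : ℝ) : ℂ) = _
    push_cast
    ring
  have hexp : Integrable (fun x : ℝ ↦ Complex.exp (t * x * Complex.I)) μ :=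
    .of_bound (by fun_prop) 1 (.of_forall fun x ↦ by
      rw [← Complex.ofReal_mul, Complex.norm_exp_ofReal_mul_I])
  have hremainder : charFun μ t -
      ∑ k ∈ Finset.range n, (t * Complex.I) ^ k / k.factorial * ↑(∫ x, x ^ k ∂μ) =
        ∫ x : ℝ, expRemainder n (t * x * Complex.I) ∂μ := by
    simp only [expRemainder]
    rw [integral_sub hexp (integrable_finsetSum _ hterm), integral_finsetSum _ hterm,
      charFun_apply_real]
    congr 1
    refine Finset.sum_congr rfl fun k _ ↦ ?_
    rw [← integral_complex_ofReal, ← integral_const_mul]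
    refine integral_congr_ae (.of_forall fun x ↦ ?_)
    push_cast
    ring
  rw [hremainder, ← integral_const_mul]
  refine norm_integral_le_of_norm_le (hμ.integrable_norm_pow'.const_mul _) (.of_forall fun x ↦ ?_)
  refine (norm_expRemainder_le_of_re_nonpos n (by simp)).trans_eq ?_
  rw [← Complex.ofReal_mul, norm_mul, Complex.norm_I, mul_one, Complex.norm_real, Real.norm_eq_abs,
    abs_mul, mul_pow, mul_div_right_comm]

theorem norm_charFun_sub_charFun_le {μ ν : Measure ℝ} [IsFiniteMeasure μ] [IsFiniteMeasure ν]
    {n : ℕ} (hn : Even n) (hμ : MemLp id n μ) (hν : MemLp id n ν) (t : ℝ) :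
    ‖charFun μ t - charFun ν t‖ ≤
      ∑ k ∈ Finset.range (n + 1), |t| ^ k / k.factorial * |∫ x, x ^ k ∂μ - ∫ x, x ^ k ∂ν| +
        2 * (|t| ^ n / n.factorial * ∫ x, x ^ n ∂ν) := by
  set c : ℝ := |t| ^ n / n.factorial
  set φ := fun ρ : Measure ℝ ↦
    ∑ k ∈ Finset.range n, (t * Complex.I) ^ k / k.factorial * ((∫ x, x ^ k ∂ρ : ℝ) : ℂ)
  have htaylor (ρ : Measure ℝ) [IsFiniteMeasure ρ] (hρ : MemLp id n ρ) :
      ‖charFun ρ t - φ ρ‖ ≤ c * ∫ x, x ^ n ∂ρ :=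
    (norm_charFun_sub_sum_moments_le hρ t).trans_eq (by simp only [c, hn.pow_abs])
  have hpoly : ‖φ μ - φ ν‖ ≤
      ∑ k ∈ Finset.range n, |t| ^ k / k.factorial * |∫ x, x ^ k ∂μ - ∫ x, x ^ k ∂ν| := by
    rw [← Finset.sum_sub_distrib]
    refine norm_sum_le_of_le _ fun k _ ↦ le_of_eq ?_
    rw [← mul_sub, ← Complex.ofReal_sub, norm_mul, Complex.norm_real, Real.norm_eq_abs, norm_div,
      norm_pow, norm_mul, Complex.norm_I, mul_one, Complex.norm_real, Complex.norm_natCast,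
      Real.norm_eq_abs]
  have hmoment : c * ∫ x, x ^ n ∂μ ≤
      c * |∫ x, x ^ n ∂μ - ∫ x, x ^ n ∂ν| + c * ∫ x, x ^ n ∂ν := by
    rw [← mul_add]
    gcongr
    linarith [le_abs_self (∫ x, x ^ n ∂μ - ∫ x, x ^ n ∂ν)]
  calc ‖charFun μ t - charFun ν t‖
      = ‖(charFun μ t - φ μ) + (φ μ - φ ν) - (charFun ν t - φ ν)‖ := by congr 1; ring
    _ ≤ ‖charFun μ t - φ μ‖ + ‖φ μ - φ ν‖ + ‖charFun ν t - φ ν‖ :=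
        (norm_sub_le _ _).trans (by gcongr; exact norm_add_le _ _)
    _ ≤ _ := by
        rw [Finset.sum_range_succ]
        linarith [htaylor μ hμ, htaylor ν hν]

theorem pow_div_factorial_mul_integral_pow_le_mgf {ν : Measure ℝ} {n : ℕ} (hn : Even n) {r : ℝ}
    (hr : Integrable (fun x ↦ Real.exp (r * x)) ν)
    (hr' : Integrable (fun x ↦ Real.exp (-r * x)) ν) :
    r ^ n / n.factorial * ∫ x, x ^ n ∂ν ≤
      ProbabilityTheory.mgf id ν r + ProbabilityTheory.mgf id ν (-r) := by
  simp only [ProbabilityTheory.mgf, id]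
  rw [← integral_const_mul, ← integral_add hr hr']
  refine integral_mono_of_nonneg (.of_forall fun x ↦ ?_) (hr.add hr') (.of_forall fun x ↦ ?_)
  · exact mul_nonneg (div_nonneg (hn.pow_nonneg _) n.factorial.cast_nonneg) (hn.pow_nonneg _)
  · calc r ^ n / n.factorial * x ^ n = |r * x| ^ n / n.factorial := by
          rw [hn.pow_abs, mul_pow, mul_div_right_comm]
      _ ≤ Real.exp |r * x| := Real.pow_div_factorial_le_exp _ (abs_nonneg _) n
      _ ≤ Real.exp (r * x) + Real.exp (-(r * x)) := Real.exp_abs_le _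
      _ = Real.exp (r * x) + Real.exp (-r * x) := by rw [neg_mul]

theorem tendsto_charFun_sub_charFun_of_tendsto_moments {ι : Type*} {l : Filter ι}
    {μ ν : ι → Measure ℝ} [∀ i, IsFiniteMeasure (μ i)] [∀ i, IsFiniteMeasure (ν i)]
    (hμ : ∀ i (n : ℕ), MemLp id n (μ i)) (hν : ∀ i (n : ℕ), MemLp id n (ν i))
    (hexp : ∀ i r, Integrable (fun x ↦ Real.exp (r * x)) (ν i))
    (hmgf : ∀ r, ∃ C, ∀ᶠ i in l, ProbabilityTheory.mgf id (ν i) r ≤ C)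
    (hmoments : ∀ k : ℕ, Tendsto (fun i ↦ ∫ x, x ^ k ∂μ i - ∫ x, x ^ k ∂ν i) l (𝓝 0)) (t : ℝ) :
    Tendsto (fun i ↦ charFun (μ i) t - charFun (ν i) t) l (𝓝 0) := by
  obtain ⟨C, hC⟩ := hmgf (2 * t)
  obtain ⟨C', hC'⟩ := hmgf (-(2 * t))
  have htail : Tendsto (fun n : ℕ ↦ 2 * ((1 / 4 : ℝ) ^ n * (C + C'))) atTop (𝓝 0) := by
    simpa using ((tendsto_pow_atTop_nhds_zero_of_lt_one (r := (1 / 4 : ℝ)) (by norm_num)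
      (by norm_num)).mul_const (C + C')).const_mul 2
  rw [Metric.tendsto_nhds]
  intro ε hε
  obtain ⟨n, hn⟩ := (htail.eventually (gt_mem_nhds (half_pos hε))).exists
  have heven : Even (2 * n) := even_two_mul n
  have hhead : Tendsto (fun i ↦ ∑ k ∈ Finset.range (2 * n + 1), |t| ^ k / k.factorial *
      |∫ x, x ^ k ∂μ i - ∫ x, x ^ k ∂ν i|) l (𝓝 0) := by
    simpa using tendsto_finsetSum (Finset.range (2 * n + 1))
      fun k _ ↦ (hmoments k).abs.const_mul (|t| ^ k / k.factorial)
  filter_upwards [hC, hC', hhead.eventually (gt_mem_nhds (half_pos hε))] with i hCi hCi' hheadi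
  have hmoment : |t| ^ (2 * n) / (2 * n).factorial * ∫ x, x ^ (2 * n) ∂ν i ≤
      (1 / 4) ^ n * (C + C') := by
    have hscale : |t| ^ (2 * n) = (1 / 4) ^ n * (2 * t) ^ (2 * n) := by
      rw [heven.pow_abs, pow_mul, pow_mul, ← mul_pow]
      ring
    rw [hscale, mul_div_assoc, mul_assoc]
    gcongr
    exact (pow_div_factorial_mul_integral_pow_le_mgf heven (hexp i _) (hexp i _)).trans
      (add_le_add hCi hCi')
  rw [dist_zero_right]
  linarith [norm_charFun_sub_charFun_le heven (hμ i (2 * n)) (hν i (2 * n)) t]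

theorem tendsto_real_Iic_of_tendsto_charFun {ι : Type*} {l : Filter ι} [l.IsCountablyGenerated]
    {μ : ι → Measure ℝ} {ν : Measure ℝ} [IsProbabilityMeasure ν] [NullSingletonClass ν]
    (hμ : ∀ᶠ i in l, IsProbabilityMeasure (μ i))
    (hcharFun : ∀ t, Tendsto (fun i ↦ charFun (μ i) t) l (𝓝 (charFun ν t))) (γ : ℝ) :
    Tendsto (fun i ↦ (μ i).real (Set.Iic γ)) l (𝓝 (ν.real (Set.Iic γ))) := by
  classical
  let law (i : ι) : ProbabilityMeasure ℝ :=
    if h : IsProbabilityMeasure (μ i) then ⟨μ i, h⟩ else ⟨ν, inferInstance⟩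
  have hlaw : ∀ᶠ i in l, (law i : Measure ℝ) = μ i := by
    filter_upwards [hμ] with i hi
    simp only [law, hi, ↓reduceDIte, ProbabilityMeasure.coe_mk]
  refine tendsto_of_seq_tendsto fun x hx ↦ ?_
  have hweak : Tendsto (fun n ↦ law (x n)) atTop (𝓝 ⟨ν, inferInstance⟩) := by
    refine ProbabilityMeasure.tendsto_iff_tendsto_charFun.2 fun t ↦ ?_
    refine ((hcharFun t).comp hx).congr' ?_
    filter_upwards [hx.eventually hlaw] with n hn
    rw [hn, Function.comp_apply]
  have hcdf := (ENNReal.tendsto_toReal (measure_ne_top ν (Set.Iic γ))).comp <|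
    ProbabilityMeasure.tendsto_measure_of_null_frontier_of_tendsto' hweak (E := Set.Iic γ)
      (by simp)
  refine hcdf.congr' ?_
  filter_upwards [hx.eventually hlaw] with n hn
  simp only [Function.comp_apply, hn, Measure.real]

theorem gaussianReal_real_Iic (γ : ℝ) :
    (ProbabilityTheory.gaussianReal 0 1).real (Set.Iic γ) = gaussPhi γ := by
  rw [Measure.real, ProbabilityTheory.gaussianReal_apply_eq_integral 0 one_ne_zero,
    ENNReal.toReal_ofReal
      (integral_nonneg fun x ↦ ProbabilityTheory.gaussianPDFReal_nonneg _ _ _),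
    gaussPhi, ← integral_const_mul]
  simp [ProbabilityTheory.gaussianPDFReal]

theorem continuous_gaussPhi : Continuous gaussPhi := by
  have hint : Integrable (fun u : ℝ ↦ Real.exp (-u ^ 2 / 2)) :=
    (integrable_exp_neg_mul_sq (b := 1 / 2) (by norm_num)).congr
      (.of_forall fun u ↦ congrArg Real.exp (by ring))
  have hIic : (fun γ : ℝ ↦ ∫ u in Set.Iic γ, Real.exp (-u ^ 2 / 2)) = fun γ ↦
      (∫ u in Set.Iic 0, Real.exp (-u ^ 2 / 2)) + ∫ u in (0 : ℝ)..γ, Real.exp (-u ^ 2 / 2) := by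
    funext γ
    rw [← intervalIntegral.integral_Iic_sub_Iic hint.integrableOn hint.integrableOn,
      add_sub_cancel]
  refine continuous_const.mul (hIic ▸ continuous_const.add ?_)
  exact hint.continuous_primitive 0

/-- The image under `X` of the measure with mass `w a` at each point `a` of the finite set `s`.
Negative weights are truncated to `0`, which makes this a finite measure without conditions. -/
def weightedLaw {α : Type*} (s : Finset α) (w X : α → ℝ) : Measure ℝ :=
  ∑ a ∈ s, ENNReal.ofReal (w a) • Measure.dirac (X a)

section WeightedLaw

variable {α : Type*} (s : Finset α) (w X : α → ℝ)

instance isFiniteMeasure_weightedLaw : IsFiniteMeasure (weightedLaw s w X) := by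
  refine ⟨?_⟩
  simp only [weightedLaw, Measure.coe_finsetSum, Finset.sum_apply, Measure.smul_apply,
    measure_univ, smul_eq_mul, mul_one]
  exact ENNReal.sum_lt_top.2 fun _ _ ↦ ENNReal.ofReal_lt_top

theorem integrable_weightedLaw {E : Type*} [NormedAddCommGroup E] (f : ℝ → E) :
    Integrable f (weightedLaw s w X) :=
  integrable_finsetSum_measure.2 fun _ _ ↦
    (integrable_dirac (by simp)).smul_measure ENNReal.ofReal_ne_top

theorem memLp_id_weightedLaw (n : ℕ) : MemLp id n (weightedLaw s w X) := by
  rcases eq_or_ne n 0 with rfl | hn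
  · simpa using measurable_id.aestronglyMeasurable
  · exact (integrable_norm_rpow_iff aestronglyMeasurable_id (by simpa using hn) (by simp)).1
      (integrable_weightedLaw s w X _)

variable {s w}

theorem integral_weightedLaw (hw : ∀ a ∈ s, 0 ≤ w a) {E : Type*} [NormedAddCommGroup E]
    [NormedSpace ℝ E] [CompleteSpace E] (f : ℝ → E) :
    ∫ x, f x ∂weightedLaw s w X = ∑ a ∈ s, w a • f (X a) := by
  rw [weightedLaw, integral_finsetSum_measure fun _ _ ↦
    (integrable_dirac (by simp)).smul_measure ENNReal.ofReal_ne_top]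
  refine Finset.sum_congr rfl fun a ha ↦ ?_
  rw [integral_smul_measure, integral_dirac, ENNReal.toReal_ofReal (hw a ha)]

theorem weightedLaw_real (hw : ∀ a ∈ s, 0 ≤ w a) {t : Set ℝ} (ht : MeasurableSet t)
    [DecidablePred fun a ↦ X a ∈ t] :
    (weightedLaw s w X).real t = ∑ a ∈ s with X a ∈ t, w a := by
  rw [← integral_indicator_one ht, integral_weightedLaw X hw, Finset.sum_filter]
  exact Finset.sum_congr rfl fun a _ ↦ by simp [Set.indicator_apply]

theorem isProbabilityMeasure_weightedLaw (hw : ∀ a ∈ s, 0 ≤ w a) (hsum : ∑ a ∈ s, w a = 1) :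
    IsProbabilityMeasure (weightedLaw s w X) := by
  classical
  rw [isProbabilityMeasure_iff_real, weightedLaw_real X hw .univ]
  simpa using hsum

end WeightedLaw

/-- The probability that the set of successes among independent trials indexed by `P`, the trial
`p` succeeding with probability `lam p`, is exactly `T`. -/
def bernoulliWeight {P R : Type*} [DecidableEq P] [CommRing R] (s : Finset P) (lam : P → R)
    (T : Finset P) : R :=
  (∏ p ∈ T, lam p) * ∏ p ∈ s \ T, (1 - lam p)

section BernoulliWeight

variable {P : Type*} [DecidableEq P]

theorem sum_bernoulliWeight_mul_pow_card {R : Type*} [CommRing R] (s : Finset P) (lam : P → R)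
    (z : R) :
    ∑ T ∈ s.powerset, bernoulliWeight s lam T * z ^ T.card = ∏ p ∈ s, (1 + lam p * (z - 1)) := by
  have hfactor (p : P) : 1 + lam p * (z - 1) = lam p * z + (1 - lam p) := by ring
  simp only [hfactor, Finset.prod_add, Finset.prod_mul_distrib, Finset.prod_const, bernoulliWeight]
  exact Finset.sum_congr rfl fun T _ ↦ by ring

theorem map_bernoulliWeight {R R' : Type*} [CommRing R] [CommRing R'] (f : R →+* R')
    (s : Finset P) (lam : P → R) (T : Finset P) :
    f (bernoulliWeight s lam T) = bernoulliWeight s (f ∘ lam) T := by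
  simp [bernoulliWeight]

theorem sum_bernoulliWeight_mul_choose {R : Type*} [CommRing R] (s : Finset P) (lam : P → R)
    (u : ℕ) :
    ∑ T ∈ s.powerset, bernoulliWeight s lam T * T.card.choose u =
      ∑ U ∈ s.powersetCard u, ∏ p ∈ U, lam p := by
  open Polynomial in
  have hgen := congrArg (coeff · u) <|
    sum_bernoulliWeight_mul_pow_card s (C ∘ lam : P → R[X]) (1 + X)
  simp only [← map_bernoulliWeight, add_sub_cancel_left, Function.comp_apply,
    Polynomial.finsetSum_coeff, Polynomial.coeff_C_mul, Polynomial.coeff_one_add_X_pow] at hgen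
  rw [hgen, Finset.prod_one_add, Polynomial.finsetSum_coeff]
  simp only [Finset.prod_mul_distrib, Finset.prod_const, ← map_prod, Polynomial.coeff_C_mul_X_pow]
  rw [Finset.powersetCard_eq_filter, Finset.sum_filter]
  exact Finset.sum_congr rfl fun T _ ↦ by simp [eq_comm]

theorem bernoulliWeight_nonneg {s T : Finset P} {lam : P → ℝ}
    (hlam : ∀ p ∈ s, lam p ∈ Set.Icc (0 : ℝ) 1) (hT : T ⊆ s) : 0 ≤ bernoulliWeight s lam T :=
  mul_nonneg (Finset.prod_nonneg fun p hp ↦ (hlam p (hT hp)).1)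
    (Finset.prod_nonneg fun p hp ↦ sub_nonneg.2 (hlam p (Finset.mem_sdiff.1 hp).1).2)

end BernoulliWeight

theorem pow_eq_sum_stirlingSecond_mul_descFactorial (n j : ℕ) :
    n ^ j = ∑ u ∈ Finset.range (j + 1), Nat.stirlingSecond j u * n.descFactorial u := by
  induction j with
  | zero => simp
  | succ j ih =>
    have hmul (u : ℕ) :
        n * n.descFactorial u = u * n.descFactorial u + n.descFactorial (u + 1) := by
      rcases le_or_gt u n with h | h
      · rw [Nat.descFactorial_succ, ← add_mul, Nat.add_sub_cancel' h]
      · simp [Nat.descFactorial_eq_zero_iff_lt.2 h]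
    have hshift : ∑ u ∈ Finset.range (j + 1),
          (u + 1) * Nat.stirlingSecond j (u + 1) * n.descFactorial (u + 1) =
        ∑ u ∈ Finset.range (j + 1), u * Nat.stirlingSecond j u * n.descFactorial u := by
      rw [Finset.sum_range_succ, Finset.sum_range_succ',
        Nat.stirlingSecond_eq_zero_of_lt j.lt_succ_self]
      simp
    calc n ^ (j + 1) = ∑ u ∈ Finset.range (j + 1),
          (u * Nat.stirlingSecond j u * n.descFactorial u +
            Nat.stirlingSecond j u * n.descFactorial (u + 1)) := by
          rw [pow_succ', ih, Finset.mul_sum]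
          exact Finset.sum_congr rfl fun u _ ↦ by rw [mul_left_comm, hmul]; ring
      _ = ∑ u ∈ Finset.range (j + 1),
          Nat.stirlingSecond (j + 1) (u + 1) * n.descFactorial (u + 1) := by
          rw [Finset.sum_add_distrib, ← hshift, ← Finset.sum_add_distrib]
          exact Finset.sum_congr rfl fun u _ ↦ by rw [Nat.stirlingSecond_succ_succ]; ring
      _ = _ := by simp [Finset.sum_range_succ' _ (j + 1)]

section Moments

open Asymptotics

variable {ι : Type*} {l : Filter ι} {L : ι → ℝ}

theorem superpolynomialDecay_sum {κ : Type*} (s : Finset κ) {f : κ → ι → ℝ}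
    (hf : ∀ j ∈ s, SuperpolynomialDecay l L (f j)) :
    SuperpolynomialDecay l L fun i ↦ ∑ j ∈ s, f j i := fun n ↦ by
  simpa [Finset.mul_sum] using tendsto_finsetSum s fun j hj ↦ hf j hj n

theorem superpolynomialDecay_apply_pow {D : ι → (ℕ → ℝ) →ₗ[ℝ] ℝ}
    (hD : ∀ u, SuperpolynomialDecay l L fun i ↦ D i fun n ↦ n.choose u) (j : ℕ) :
    SuperpolynomialDecay l L fun i ↦ D i fun n ↦ n ^ j := by
  have hpow : (fun n : ℕ ↦ (n : ℝ) ^ j) = ∑ u ∈ Finset.range (j + 1),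
      (Nat.stirlingSecond j u * u.factorial : ℝ) • fun n : ℕ ↦ (n.choose u : ℝ) := by
    funext n
    simp only [Finset.sum_apply, Pi.smul_apply, smul_eq_mul, mul_assoc]
    exact_mod_cast pow_eq_sum_stirlingSecond_mul_descFactorial n j |>.trans
      (by simp only [Nat.descFactorial_eq_factorial_mul_choose])
  simp only [hpow, map_sum, map_smul, smul_eq_mul]
  exact superpolynomialDecay_sum _ fun u _ ↦ (hD u).const_mul _

theorem tendsto_apply_normalized_pow (hL : Tendsto L l atTop) {D : ι → (ℕ → ℝ) →ₗ[ℝ] ℝ}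
    (hD : ∀ u, SuperpolynomialDecay l L fun i ↦ D i fun n ↦ n.choose u) (k : ℕ) :
    Tendsto (fun i ↦ D i fun n ↦ ((n - L i) / √(L i)) ^ k) l (𝓝 0) := by
  have hexpand (i : ι) : (fun n : ℕ ↦ ((n - L i) / √(L i)) ^ k) =
      (√(L i))⁻¹ ^ k • ∑ j ∈ Finset.range (k + 1),
        ((k.choose j : ℝ) * (-1) ^ (k - j) * L i ^ (k - j)) • fun n : ℕ ↦ (n : ℝ) ^ j := by
    funext n
    simp only [Pi.smul_apply, Finset.sum_apply, smul_eq_mul]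
    rw [div_eq_inv_mul, mul_pow, sub_eq_add_neg, add_pow]
    congr 1
    exact Finset.sum_congr rfl fun j _ ↦ by rw [neg_pow]; ring
  have hinv : Tendsto (fun i ↦ (√(L i))⁻¹ ^ k) l (𝓝 (0 ^ k)) :=
    (tendsto_inv_atTop_zero.comp (Real.tendsto_sqrt_atTop.comp hL)).pow k
  have hsum := tendsto_finsetSum (Finset.range (k + 1)) fun j _ ↦
    (superpolynomialDecay_apply_pow hD j (k - j)).const_mul ((k.choose j : ℝ) * (-1) ^ (k - j))
  simp only [hexpand, map_smul, map_sum, smul_eq_mul]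
  simpa [mul_assoc] using hinv.mul hsum

end Moments

section GaussianLimit

open Asymptotics

variable {ι : Type*} {l : Filter ι} {s μ : ι → ℝ}

theorem tendsto_mul_exp_sub_one_sub_mul (hs : Tendsto s l atTop)
    (hμ : Tendsto (fun i ↦ (μ i - s i ^ 2) / s i) l (𝓝 0)) (c : ℂ) :
    Tendsto (fun i ↦ μ i * (Complex.exp (c / s i) - 1) - c * s i) l (𝓝 (c ^ 2 / 2)) := by
  have hs_ne : ∀ᶠ i in l, (s i : ℂ) ≠ 0 :=
    (hs.eventually_ne_atTop 0).mono fun i hi ↦ mod_cast hi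
  have hstep : Tendsto (fun i ↦ c / s i) l (𝓝 0) := by
    simpa [div_eq_mul_inv] using
      ((Complex.continuous_ofReal.tendsto 0).comp (tendsto_inv_atTop_zero.comp hs)).const_mul c
  have hmul_step : (fun i ↦ s i * (c / s i)) =ᶠ[l] fun _ ↦ c :=
    hs_ne.mono fun i hi ↦ mul_div_cancel₀ c hi
  have hlinear : (fun i ↦ s i * (Complex.exp (c / s i) - 1)) =O[l] fun _ ↦ (1 : ℝ) := by
    have hO := (Complex.exp_sub_sum_range_isBigO_pow 1).comp_tendsto hstep
    simp only [Function.comp_def, Finset.sum_range_one, pow_zero, Nat.factorial_zero,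
      Nat.cast_one, div_one, pow_one] at hO
    exact ((isBigO_refl (fun i ↦ (s i : ℂ)) l).mul hO).trans
      (hmul_step.trans_isBigO (isBigO_const_one ℝ c l))
  have hcubic : Tendsto (fun i ↦ (s i : ℂ) ^ 2 * (Complex.exp (c / s i) -
      ∑ k ∈ Finset.range 3, (c / s i) ^ k / k.factorial)) l (𝓝 0) := by
    refine (isLittleO_one_iff ℝ).1 ?_
    refine ((isBigO_refl (fun i ↦ (s i : ℂ) ^ 2) l).mul_isLittleO
      ((Complex.exp_sub_sum_range_succ_isLittleO_pow 2).comp_tendsto hstep)).trans_isBigO ?_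
    simp only [Function.comp_apply, ← mul_pow]
    exact (hmul_step.pow_const 2).trans_isBigO (isBigO_const_one ℝ (c ^ 2) l)
  have herror : Tendsto (fun i ↦ (((μ i - s i ^ 2) / s i : ℝ) : ℂ) *
      (s i * (Complex.exp (c / s i) - 1))) l (𝓝 0) := by
    refine (isLittleO_one_iff ℝ).1 ?_
    simpa using ((isLittleO_one_iff ℝ).2
      (((Complex.continuous_ofReal.tendsto 0).comp hμ))).mul_isBigO hlinear
  have hlim := (hcubic.add_const (c ^ 2 / 2)).add herror
  rw [zero_add, add_zero] at hlim
  refine hlim.congr' (hs_ne.mono fun i hi ↦ ?_)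
  simp only [Finset.sum_range_succ, Finset.sum_range_zero, Nat.factorial]
  push_cast
  field_simp
  ring

end GaussianLimit

section Poisson

theorem norm_prod_sub_prod_le_sum_norm_sub {κ R : Type*} [NormedCommRing R] [NormOneClass R]
    (s : Finset κ) {f g : κ → R} (hf : ∀ j ∈ s, ‖f j‖ ≤ 1) (hg : ∀ j ∈ s, ‖g j‖ ≤ 1) :
    ‖∏ j ∈ s, f j - ∏ j ∈ s, g j‖ ≤ ∑ j ∈ s, ‖f j - g j‖ := by
  induction s using Finset.cons_induction with
  | empty => simp
  | cons j s hj ih =>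
    simp only [Finset.mem_cons, forall_eq_or_imp] at hf hg
    have hprod : ‖∏ j ∈ s, g j‖ ≤ 1 :=
      (Finset.norm_prod_le s g).trans (Finset.prod_le_one (fun _ _ ↦ norm_nonneg _) hg.2)
    rw [Finset.prod_cons, Finset.prod_cons, Finset.sum_cons]
    calc ‖f j * ∏ j ∈ s, f j - g j * ∏ j ∈ s, g j‖
        = ‖(f j - g j) * ∏ j ∈ s, g j + f j * (∏ j ∈ s, f j - ∏ j ∈ s, g j)‖ := by
          congr 1; ring
      _ ≤ ‖f j - g j‖ * ‖∏ j ∈ s, g j‖ + ‖f j‖ * ‖∏ j ∈ s, f j - ∏ j ∈ s, g j‖ :=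
          (norm_add_le _ _).trans (add_le_add (norm_mul_le _ _) (norm_mul_le _ _))
      _ ≤ ‖f j - g j‖ * 1 + 1 * ∑ j ∈ s, ‖f j - g j‖ := by
          gcongr
          exacts [hf.1, ih hf.2 hg.2]
      _ = _ := by rw [mul_one, one_mul]

theorem norm_prod_one_add_mul_sub_exp_le {κ : Type*} (s : Finset κ) {lam : κ → ℝ}
    (hlam : ∀ j ∈ s, lam j ∈ Set.Icc (0 : ℝ) 1) {z : ℂ} (hz : ‖z‖ ≤ 1) (hz1 : ‖z - 1‖ ≤ 1) :
    ‖∏ j ∈ s, (1 + lam j * (z - 1)) - Complex.exp ((∑ j ∈ s, lam j : ℝ) * (z - 1))‖ ≤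
      ‖z - 1‖ ^ 2 * ∑ j ∈ s, lam j ^ 2 := by
  have hfactor : ∀ j ∈ s, ‖1 + lam j * (z - 1)‖ ≤ 1 := fun j hj ↦ by
    obtain ⟨h0, h1⟩ := hlam j hj
    calc ‖1 + lam j * (z - 1)‖ = ‖((1 - lam j : ℝ) : ℂ) + lam j * z‖ := by
          congr 1; push_cast; ring
      _ ≤ (1 - lam j) + lam j * ‖z‖ := by
          refine (norm_add_le _ _).trans_eq ?_
          rw [norm_mul, Complex.norm_of_nonneg h0, Complex.norm_of_nonneg (sub_nonneg.2 h1)]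
      _ ≤ 1 := by linarith [mul_le_of_le_one_right h0 hz]
  have hexp : ∀ j ∈ s, ‖Complex.exp (lam j * (z - 1))‖ ≤ 1 := fun j hj ↦ by
    rw [Complex.norm_exp, Real.exp_le_one_iff, Complex.re_ofReal_mul, Complex.sub_re,
      Complex.one_re]
    exact mul_nonpos_of_nonneg_of_nonpos (hlam j hj).1
      (sub_nonpos.2 ((Complex.re_le_norm z).trans hz))
  have hdiff : ∀ j ∈ s, ‖1 + lam j * (z - 1) - Complex.exp (lam j * (z - 1))‖ ≤
      ‖z - 1‖ ^ 2 * lam j ^ 2 := fun j hj ↦ by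
    have hnorm : ‖(lam j : ℂ) * (z - 1)‖ = lam j * ‖z - 1‖ := by
      rw [norm_mul, Complex.norm_of_nonneg (hlam j hj).1]
    rw [norm_sub_rev, ← sub_sub]
    refine (Complex.norm_exp_sub_one_sub_id_le ?_).trans_eq ?_
    · rw [hnorm]
      exact mul_le_one₀ (hlam j hj).2 (norm_nonneg _) hz1
    · rw [hnorm, mul_pow, mul_comm]
  rw [Complex.ofReal_sum, Finset.sum_mul, Complex.exp_sum, Finset.mul_sum]
  exact (norm_prod_sub_prod_le_sum_norm_sub s hfactor hexp).trans (Finset.sum_le_sum hdiff)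

end Poisson

section BernoulliLimit

open Asymptotics

variable {ι P : Type*} {l : Filter ι} {L : ι → ℝ} {s : ι → Finset P}
  {lam : ι → P → ℝ}

theorem tendsto_sum_mul_exp_sub_one_sub_mul (hL : Tendsto L l atTop)
    (hmean : (fun i ↦ ∑ p ∈ s i, lam i p - L i) =o[l] fun i ↦ √(L i)) (c : ℂ) :
    Tendsto (fun i ↦ (∑ p ∈ s i, lam i p : ℝ) * (Complex.exp (c / √(L i)) - 1) - c * √(L i)) l
      (𝓝 (c ^ 2 / 2)) := by
  refine tendsto_mul_exp_sub_one_sub_mul (Real.tendsto_sqrt_atTop.comp hL) ?_ c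
  refine hmean.tendsto_div_nhds_zero.congr' ?_
  filter_upwards [hL.eventually_ge_atTop 0] with i hi
  rw [Function.comp_apply, Real.sq_sqrt hi]

theorem tendsto_prod_one_add_mul_exp_sub_one_sub_exp (hL : Tendsto L l atTop)
    (hlam : ∀ᶠ i in l, ∀ p ∈ s i, lam i p ∈ Set.Icc (0 : ℝ) 1)
    (hsq : (fun i ↦ ∑ p ∈ s i, lam i p ^ 2) =o[l] L) (t : ℝ) :
    Tendsto (fun i ↦ ∏ p ∈ s i, (1 + lam i p * (Complex.exp (t * Complex.I / √(L i)) - 1)) -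
      Complex.exp ((∑ p ∈ s i, lam i p : ℝ) * (Complex.exp (t * Complex.I / √(L i)) - 1)))
      l (𝓝 0) := by
  have hbound : Tendsto (fun i ↦ t ^ 2 * ((∑ p ∈ s i, lam i p ^ 2) / L i)) l (𝓝 0) := by
    simpa using hsq.tendsto_div_nhds_zero.const_mul (t ^ 2)
  refine squeeze_zero_norm' ?_ hbound
  filter_upwards [hlam, hL.eventually_ge_atTop (max 1 (t ^ 2))] with i hlami hLi
  have hLpos : 0 < L i := zero_lt_one.trans_le ((le_max_left _ _).trans hLi)
  have hangle : t * Complex.I / √(L i) = Complex.I * (t / √(L i) : ℝ) := by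
    push_cast
    ring
  rw [hangle]
  set z := Complex.exp (Complex.I * (t / √(L i) : ℝ))
  have hz : ‖z‖ ≤ 1 := by rw [Complex.norm_exp_I_mul_ofReal]
  have hz_sub : ‖z - 1‖ ^ 2 ≤ t ^ 2 / L i := by
    rw [← Real.sq_sqrt hLpos.le, ← div_pow, ← sq_abs (t / _)]
    exact pow_le_pow_left₀ (norm_nonneg _) Real.norm_exp_I_mul_ofReal_sub_one_le 2
  have hz_sub_le : ‖z - 1‖ ≤ 1 := (sq_le_one_iff₀ (norm_nonneg _)).1 <|
    hz_sub.trans ((div_le_one hLpos).2 ((le_max_right _ _).trans hLi))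
  calc _ ≤ ‖z - 1‖ ^ 2 * ∑ p ∈ s i, lam i p ^ 2 :=
        norm_prod_one_add_mul_sub_exp_le (s i) hlami hz hz_sub_le
    _ ≤ t ^ 2 / L i * ∑ p ∈ s i, lam i p ^ 2 := by gcongr
    _ = _ := by ring

variable [DecidableEq P]

/-- The law of the number of successes among independent trials indexed by `s` with success
probabilities `lam`, centred at `L` and scaled by `√L`. -/
def normalizedBernoulliLaw (s : Finset P) (lam : P → ℝ) (L : ℝ) : Measure ℝ :=
  weightedLaw s.powerset (bernoulliWeight s lam) fun T ↦ (T.card - L) / √L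

instance isFiniteMeasure_normalizedBernoulliLaw (s : Finset P) (lam : P → ℝ) (L : ℝ) :
    IsFiniteMeasure (normalizedBernoulliLaw s lam L) :=
  isFiniteMeasure_weightedLaw _ _ _

theorem integral_normalizedBernoulliLaw {s : Finset P} {lam : P → ℝ}
    (hlam : ∀ p ∈ s, lam p ∈ Set.Icc (0 : ℝ) 1) (L : ℝ) {E : Type*} [NormedAddCommGroup E]
    [NormedSpace ℝ E] [CompleteSpace E] (f : ℝ → E) :
    ∫ x, f x ∂normalizedBernoulliLaw s lam L =
      ∑ T ∈ s.powerset, bernoulliWeight s lam T • f ((T.card - L) / √L) :=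
  integral_weightedLaw _ (fun _ hT ↦ bernoulliWeight_nonneg hlam (Finset.mem_powerset.1 hT)) f

theorem integral_cexp_normalizedBernoulliLaw {s : Finset P} {lam : P → ℝ}
    (hlam : ∀ p ∈ s, lam p ∈ Set.Icc (0 : ℝ) 1) {L : ℝ} (hL : 0 < L) (c : ℂ) :
    ∫ x : ℝ, Complex.exp (c * x) ∂normalizedBernoulliLaw s lam L =
      Complex.exp (-(c * √L)) * ∏ p ∈ s, (1 + lam p * (Complex.exp (c / √L) - 1)) := by
  have hsqrt : ((√L : ℝ) : ℂ) ≠ 0 := mod_cast (Real.sqrt_pos.2 hL).ne'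
  have hL_eq : (L : ℂ) = (√L : ℝ) ^ 2 := mod_cast (Real.sq_sqrt hL.le).symm
  rw [integral_normalizedBernoulliLaw hlam]
  have hgen := sum_bernoulliWeight_mul_pow_card s (fun p ↦ (lam p : ℂ)) (Complex.exp (c / √L))
  rw [← hgen, Finset.mul_sum]
  refine Finset.sum_congr rfl fun T _ ↦ ?_
  have hexp : Complex.exp (c * ((T.card - L) / √L : ℝ)) =
      Complex.exp (-(c * √L)) * Complex.exp (c / √L) ^ T.card := by
    rw [← Complex.exp_nat_mul, ← Complex.exp_add]
    congr 1
    push_cast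
    rw [hL_eq]
    field_simp
    ring
  rw [hexp, Complex.real_smul, mul_left_comm]
  congr 2
  exact map_bernoulliWeight Complex.ofRealHom s lam T

theorem tendsto_charFun_normalizedBernoulliLaw (hL : Tendsto L l atTop)
    (hlam : ∀ᶠ i in l, ∀ p ∈ s i, lam i p ∈ Set.Icc (0 : ℝ) 1)
    (hmean : (fun i ↦ ∑ p ∈ s i, lam i p - L i) =o[l] fun i ↦ √(L i))
    (hsq : (fun i ↦ ∑ p ∈ s i, lam i p ^ 2) =o[l] L) (t : ℝ) :
    Tendsto (fun i ↦ charFun (normalizedBernoulliLaw (s i) (lam i) (L i)) t) l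
      (𝓝 (charFun (ProbabilityTheory.gaussianReal 0 1) t)) := by
  set c : ℂ := t * Complex.I
  set z : ι → ℂ := fun i ↦ Complex.exp (c / √(L i))
  set μ : ι → ℝ := fun i ↦ ∑ p ∈ s i, lam i p
  have hpoisson : Tendsto (fun i ↦ Complex.exp (-(c * √(L i))) * Complex.exp (μ i * (z i - 1))) l
      (𝓝 (charFun (ProbabilityTheory.gaussianReal 0 1) t)) := by
    have hlim := (Complex.continuous_exp.tendsto _).comp
      (tendsto_sum_mul_exp_sub_one_sub_mul hL hmean c)
    rw [ProbabilityTheory.charFun_gaussianReal]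
    convert! hlim using 2
    · rw [Function.comp_apply, ← Complex.exp_add, neg_add_eq_sub]
    · simp [c, mul_pow, neg_div]
  have hleCam : Tendsto (fun i ↦ Complex.exp (-(c * √(L i))) *
      (∏ p ∈ s i, (1 + lam i p * (z i - 1)) - Complex.exp (μ i * (z i - 1)))) l (𝓝 0) := by
    refine (tendsto_zero_iff_norm_tendsto_zero.1
      (tendsto_prod_one_add_mul_exp_sub_one_sub_exp hL hlam hsq t)).congr (fun i ↦ ?_) |>
      tendsto_zero_iff_norm_tendsto_zero.2
    rw [norm_mul, Complex.norm_exp]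
    simp [c, z, μ]
  have hlim := hpoisson.add hleCam
  rw [add_zero] at hlim
  refine hlim.congr' ?_
  filter_upwards [hlam, hL.eventually_gt_atTop 0] with i hlami hLi
  simp only [charFun_apply_real, mul_right_comm _ _ Complex.I]
  rw [integral_cexp_normalizedBernoulliLaw hlami hLi, ← mul_add, add_sub_cancel]

theorem exists_mgf_normalizedBernoulliLaw_le (hL : Tendsto L l atTop)
    (hlam : ∀ᶠ i in l, ∀ p ∈ s i, lam i p ∈ Set.Icc (0 : ℝ) 1)
    (hmean : (fun i ↦ ∑ p ∈ s i, lam i p - L i) =o[l] fun i ↦ √(L i)) (r : ℝ) :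
    ∃ C, ∀ᶠ i in l,
      ProbabilityTheory.mgf id (normalizedBernoulliLaw (s i) (lam i) (L i)) r ≤ C := by
  have hlim := (Complex.continuous_re.tendsto _).comp
    (tendsto_sum_mul_exp_sub_one_sub_mul hL hmean r)
  refine ⟨Real.exp (((r : ℂ) ^ 2 / 2).re + 1), ?_⟩
  filter_upwards [hlam, hL.eventually_gt_atTop 0, hlim.eventually_le_const (lt_add_one _)]
    with i hlami hLi hle
  have hmgf : ((ProbabilityTheory.mgf id (normalizedBernoulliLaw (s i) (lam i) (L i)) r : ℝ) : ℂ) =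
      (Real.exp (-(r * √(L i))) * ∏ p ∈ s i, (1 + lam i p * (Real.exp (r / √(L i)) - 1)) : ℝ) := by
    rw [ProbabilityTheory.mgf, ← integral_complex_ofReal]
    push_cast
    exact integral_cexp_normalizedBernoulliLaw hlami hLi r
  rw [Complex.ofReal_inj] at hmgf
  have hfactor : ∀ p ∈ s i, 0 ≤ 1 + lam i p * (Real.exp (r / √(L i)) - 1) := fun p hp ↦ by
    nlinarith [(hlami p hp).1, (hlami p hp).2, Real.exp_pos (r / √(L i)),
      mul_nonneg (hlami p hp).1 (Real.exp_pos (r / √(L i))).le]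
  calc _ = Real.exp (-(r * √(L i))) * ∏ p ∈ s i, (1 + lam i p * (Real.exp (r / √(L i)) - 1)) := hmgf
    _ ≤ Real.exp (-(r * √(L i))) *
        ∏ p ∈ s i, Real.exp (lam i p * (Real.exp (r / √(L i)) - 1)) := by
      refine mul_le_mul_of_nonneg_left (Finset.prod_le_prod hfactor fun p _ ↦ ?_)
        (Real.exp_nonneg _)
      rw [add_comm]
      exact Real.add_one_le_exp _
    _ = Real.exp ((∑ p ∈ s i, lam i p) * (Real.exp (r / √(L i)) - 1) - r * √(L i)) := by
      rw [← Real.exp_sum, ← Finset.sum_mul, ← Real.exp_add, neg_add_eq_sub]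
    _ ≤ _ := by
      gcongr
      convert hle using 1
      rw [Function.comp_apply]
      norm_cast

end BernoulliLimit

/-- The proportion of the elements of `A` that satisfy `q`; it is `0` when `A` is empty. -/
def proportion {M : Type*} (A : Finset M) (q : M → Prop) : ℝ :=
  open Classical in ((A.filter q).card : ℝ) / A.card

theorem proportion_eq_card_filter_div {M : Type*} (A : Finset M) (q : M → Prop) [DecidablePred q] :
    proportion A q = ({m ∈ A | q m}.card : ℝ) / A.card := by
  rw [proportion]
  congr!

/-- The number of elements of `Q` that divide `m`, for an arbitrary relation `dvd`. -/
def divisorCount {P M : Type*} (dvd : P → M → Prop) (Q : Finset P) (m : M) : ℕ :=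
  open Classical in (Q.filter (dvd · m)).card

section SmallPrimes

open Asymptotics

variable {P M : Type*} (dvd : P → M → Prop) (A : Finset M) (Q : Finset P)

theorem choose_divisorCount (m : M) (u : ℕ) [DecidablePred fun U : Finset P ↦ ∀ p ∈ U, dvd p m] :
    (divisorCount dvd Q m).choose u = {U ∈ Q.powersetCard u | ∀ p ∈ U, dvd p m}.card := by
  rw [divisorCount, ← Finset.card_powersetCard]
  congr 1
  ext U
  simp only [Finset.mem_powersetCard, Finset.subset_iff, Finset.mem_filter]
  grind

theorem average_choose_divisorCount (u : ℕ) :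
    ∑ m ∈ A, (A.card : ℝ)⁻¹ * (divisorCount dvd Q m).choose u =
      ∑ U ∈ Q.powersetCard u, proportion A fun m ↦ ∀ p ∈ U, dvd p m := by
  classical
  simp only [choose_divisorCount, proportion, div_eq_inv_mul, ← Finset.mul_sum,
    Finset.card_eq_sum_ones, Finset.sum_filter, Nat.cast_sum]
  rw [Finset.sum_comm]
  congr!

/-- The law of the number of divisors in `Q` of a uniformly random element of `A`, centred at `L`
and scaled by `√L`. -/
def normalizedDivisorCountLaw (L : ℝ) : Measure ℝ :=
  weightedLaw A (fun _ ↦ (A.card : ℝ)⁻¹) fun m ↦ (divisorCount dvd Q m - L) / √L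

instance isFiniteMeasure_normalizedDivisorCountLaw (L : ℝ) :
    IsFiniteMeasure (normalizedDivisorCountLaw dvd A Q L) :=
  isFiniteMeasure_weightedLaw _ _ _

theorem normalizedDivisorCountLaw_real_Iic (L γ : ℝ) :
    (normalizedDivisorCountLaw dvd A Q L).real (Set.Iic γ) =
      proportion A fun m ↦ (divisorCount dvd Q m - L) / √L ≤ γ := by
  classical
  rw [normalizedDivisorCountLaw, weightedLaw_real _ (fun _ _ ↦ by positivity) measurableSet_Iic]
  simp [proportion, div_eq_mul_inv]

variable {A} in
theorem isProbabilityMeasure_normalizedDivisorCountLaw (hA : A.Nonempty) (L : ℝ) :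
    IsProbabilityMeasure (normalizedDivisorCountLaw dvd A Q L) := by
  refine isProbabilityMeasure_weightedLaw _ (fun _ _ ↦ by positivity) ?_
  simp [hA.card_ne_zero]

variable {ι : Type*} {l : Filter ι} {dvd} {A : ι → Finset M} {Q : ι → Finset P} {L : ι → ℝ}
  {lam : ι → P → ℝ}

theorem tendsto_moment_normalizedDivisorCountLaw_sub [DecidableEq P] (hL : Tendsto L l atTop)
    (hlam : ∀ᶠ i in l, ∀ p ∈ Q i, lam i p ∈ Set.Icc (0 : ℝ) 1)
    (hcorr : ∀ u, SuperpolynomialDecay l L fun i ↦ ∑ U ∈ (Q i).powersetCard u,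
      |proportion (A i) (fun m ↦ ∀ p ∈ U, dvd p m) - ∏ p ∈ U, lam i p|) (k : ℕ) :
    Tendsto (fun i ↦ ∫ x, x ^ k ∂normalizedDivisorCountLaw dvd (A i) (Q i) (L i) -
      ∫ x, x ^ k ∂normalizedBernoulliLaw (Q i) (lam i) (L i)) l (𝓝 0) := by
  let D (i : ι) : (ℕ → ℝ) →ₗ[ℝ] ℝ :=
    ∑ m ∈ A i, ((A i).card : ℝ)⁻¹ • LinearMap.proj (divisorCount dvd (Q i) m) -
      ∑ T ∈ (Q i).powerset, bernoulliWeight (Q i) (lam i) T • LinearMap.proj T.card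
  have hD (i : ι) (f : ℕ → ℝ) : D i f =
      ∑ m ∈ A i, ((A i).card : ℝ)⁻¹ * f (divisorCount dvd (Q i) m) -
        ∑ T ∈ (Q i).powerset, bernoulliWeight (Q i) (lam i) T * f T.card := by
    simp [D, LinearMap.sum_apply]
  have hchoose (u : ℕ) : SuperpolynomialDecay l L fun i ↦ D i fun n ↦ n.choose u := by
    refine SuperpolynomialDecay.trans_abs_le (hcorr u) fun i ↦ ?_
    rw [hD, average_choose_divisorCount, sum_bernoulliWeight_mul_choose, ← Finset.sum_sub_distrib]
    exact (Finset.abs_sum_le_sum_abs _ _).trans (le_abs_self _)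
  refine (tendsto_apply_normalized_pow hL hchoose k).congr' (hlam.mono fun i hlami ↦ ?_)
  simp only [hD, integral_normalizedBernoulliLaw hlami, normalizedDivisorCountLaw,
    integral_weightedLaw _ fun _ _ ↦ inv_nonneg.2 (Nat.cast_nonneg _), smul_eq_mul]

theorem tendsto_proportion_normalized_divisorCount_le [l.IsCountablyGenerated]
    (hA : ∀ᶠ i in l, (A i).Nonempty) (hL : Tendsto L l atTop)
    (hlam : ∀ᶠ i in l, ∀ p ∈ Q i, lam i p ∈ Set.Icc (0 : ℝ) 1)
    (hmean : (fun i ↦ ∑ p ∈ Q i, lam i p - L i) =o[l] fun i ↦ √(L i))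
    (hsq : (fun i ↦ ∑ p ∈ Q i, lam i p ^ 2) =o[l] L)
    (hcorr : ∀ u, SuperpolynomialDecay l L fun i ↦ ∑ U ∈ (Q i).powersetCard u,
      |proportion (A i) (fun m ↦ ∀ p ∈ U, dvd p m) - ∏ p ∈ U, lam i p|) (γ : ℝ) :
    Tendsto (fun i ↦ proportion (A i) fun m ↦ (divisorCount dvd (Q i) m - L i) / √(L i) ≤ γ) l
      (𝓝 (gaussPhi γ)) := by
  classical
  have := ProbabilityTheory.nullSingletonClass_gaussianReal (μ := 0) one_ne_zero
  simp only [← normalizedDivisorCountLaw_real_Iic, ← gaussianReal_real_Iic]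
  refine tendsto_real_Iic_of_tendsto_charFun
    (hA.mono fun i hi ↦ isProbabilityMeasure_normalizedDivisorCountLaw dvd _ hi _) (fun t ↦ ?_) γ
  have hcompare := tendsto_charFun_sub_charFun_of_tendsto_moments
    (μ := fun i ↦ normalizedDivisorCountLaw dvd (A i) (Q i) (L i))
    (ν := fun i ↦ normalizedBernoulliLaw (Q i) (lam i) (L i))
    (fun i n ↦ memLp_id_weightedLaw _ _ _ n) (fun i n ↦ memLp_id_weightedLaw _ _ _ n)
    (fun i r ↦ integrable_weightedLaw _ _ _ _) (exists_mgf_normalizedBernoulliLaw_le hL hlam hmean)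
    (tendsto_moment_normalizedDivisorCountLaw_sub hL hlam hcorr) t
  simpa using hcompare.add (tendsto_charFun_normalizedBernoulliLaw hL hlam hmean hsq t)

end SmallPrimes

section Transfer

variable {M P : Type*} {A : Finset M}

theorem proportion_nonneg (A : Finset M) (q : M → Prop) : 0 ≤ proportion A q := by
  rw [proportion]
  positivity

theorem proportion_le_one (A : Finset M) (q : M → Prop) : proportion A q ≤ 1 := by
  classical
  rw [proportion_eq_card_filter_div]
  exact div_le_one_of_le₀ (mod_cast Finset.card_filter_le _ _) (Nat.cast_nonneg _)

theorem proportion_mono {q r : M → Prop} (h : ∀ m ∈ A, q m → r m) :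
    proportion A q ≤ proportion A r := by
  classical
  simp only [proportion_eq_card_filter_div]
  gcongr ((?_ : ℕ) : ℝ) / _
  refine Finset.card_le_card fun m hm ↦ ?_
  rw [Finset.mem_filter] at hm ⊢
  exact ⟨hm.1, h m hm.1 hm.2⟩

theorem proportion_or_le (A : Finset M) (q r : M → Prop) :
    proportion A (fun m ↦ q m ∨ r m) ≤ proportion A q + proportion A r := by
  classical
  simp only [proportion_eq_card_filter_div, ← add_div, Finset.filter_or]
  gcongr
  exact_mod_cast Finset.card_union_le _ _

theorem proportion_lt_divisorCount_le (dvd : P → M → Prop) (A : Finset M) (Q : Finset P) {c : ℝ}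
    (hc : 0 < c) :
    proportion A (fun m ↦ c < divisorCount dvd Q m) ≤ (∑ p ∈ Q, proportion A (dvd p)) / c := by
  have hmean := average_choose_divisorCount dvd A Q 1
  simp only [Nat.choose_one_right, Finset.powersetCard_one, Finset.sum_map,
    Function.Embedding.coeFn_mk, Finset.mem_singleton, forall_eq] at hmean
  classical
  rw [le_div_iff₀ hc, ← hmean, proportion, div_eq_inv_mul, mul_assoc, ← Finset.mul_sum]
  gcongr
  calc _ = ∑ m ∈ A with c < divisorCount dvd Q m, c := by simp
    _ ≤ ∑ m ∈ A with c < divisorCount dvd Q m, (divisorCount dvd Q m : ℝ) :=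
      Finset.sum_le_sum fun m hm ↦ (Finset.mem_filter.1 hm).2.le
    _ ≤ _ := Finset.sum_le_sum_of_subset_of_nonneg (Finset.filter_subset _ _)
      fun _ _ _ ↦ Nat.cast_nonneg _

variable {ι : Type*} {l : Filter ι} {A : ι → Finset M}

theorem tendsto_proportion_of_sandwich {X : ι → M → ℝ} {q : ι → M → Prop} {F : ℝ → ℝ} {γ : ℝ}
    (hF : ContinuousAt F γ)
    (hX : ∀ γ, Tendsto (fun i ↦ proportion (A i) fun m ↦ X i m ≤ γ) l (𝓝 (F γ)))
    (hupper : ∀ δ > 0, Tendsto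
      (fun i ↦ proportion (A i) fun m ↦ ¬(q i m → X i m ≤ γ + δ)) l (𝓝 0))
    (hlower : ∀ δ > 0, Tendsto
      (fun i ↦ proportion (A i) fun m ↦ ¬(X i m ≤ γ - δ → q i m)) l (𝓝 0)) :
    Tendsto (fun i ↦ proportion (A i) (q i)) l (𝓝 (F γ)) := by
  refine tendsto_order.2 ⟨fun a ha ↦ ?_, fun b hb ↦ ?_⟩
  · have hshift : Tendsto (fun δ ↦ γ - δ) (𝓝[>] 0) (𝓝 γ) := by
      simpa using (tendsto_const_nhds.sub (tendsto_id (α := ℝ))).mono_left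
        (nhdsWithin_le_nhds (a := (0 : ℝ)) (s := Set.Ioi 0))
    obtain ⟨δ, haδ, hδ⟩ := (((hF.tendsto.comp hshift).eventually_const_lt ha).and
      self_mem_nhdsWithin).exists
    filter_upwards [((hX (γ - δ)).sub (hlower δ hδ)).eventually_const_lt (by simpa using haδ)]
      with i hi
    refine hi.trans_le (sub_le_iff_le_add.2 <| (proportion_mono fun m _ hm ↦ ?_).trans
      (proportion_or_le (A i) _ _))
    tauto
  · have hshift : Tendsto (fun δ ↦ γ + δ) (𝓝[>] 0) (𝓝 γ) := by
      simpa using (tendsto_const_nhds.add (tendsto_id (α := ℝ))).mono_left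
        (nhdsWithin_le_nhds (a := (0 : ℝ)) (s := Set.Ioi 0))
    obtain ⟨δ, hbδ, hδ⟩ := (((hF.tendsto.comp hshift).eventually_lt_const hb).and
      self_mem_nhdsWithin).exists
    filter_upwards [((hX (γ + δ)).add (hupper δ hδ)).eventually_lt_const (by simpa using hbδ)]
      with i hi
    refine ((proportion_mono fun m _ hm ↦ ?_).trans (proportion_or_le (A i) _ _)).trans_lt hi
    tauto

theorem mem_Icc_of_tendsto_sum_abs_proportion_sub {dvd : P → M → Prop} {Q : ι → Finset P}
    {lam : P → ℝ}
    (h : Tendsto (fun i ↦ ∑ p ∈ Q i, |proportion (A i) (dvd p) - lam p|) l (𝓝 0)) {p : P}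
    (hp : ∃ᶠ i in l, p ∈ Q i) : lam p ∈ Set.Icc (0 : ℝ) 1 := by
  have : (l ⊓ 𝓟 {i | p ∈ Q i}).NeBot := frequently_mem_iff_neBot.1 hp
  have hlim : Tendsto (fun i ↦ proportion (A i) (dvd p) - lam p) (l ⊓ 𝓟 {i | p ∈ Q i}) (𝓝 0) :=
    squeeze_zero_norm' (eventually_inf_principal.2 <| .of_forall fun i hi ↦
      Finset.single_le_sum (f := fun p ↦ |proportion (A i) (dvd p) - lam p|)
        (fun _ _ ↦ abs_nonneg _) hi) (h.mono_left inf_le_left)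
  exact isClosed_Icc.mem_of_tendsto (tendsto_sub_nhds_zero_iff.1 hlim)
    (.of_forall fun i ↦ ⟨proportion_nonneg _ _, proportion_le_one _ _⟩)

end Transfer

section Normalization

theorem abs_sqrt_sub_sqrt_le_one {l L : ℝ} (hl : l ∈ Set.Icc (L - 1) L) (hl0 : 0 ≤ l) :
    |√L - √l| ≤ 1 := by
  have hsqrt : √L ≤ √l + 1 := by
    refine Real.sqrt_le_iff.2 ⟨by positivity, ?_⟩
    linarith [hl.1, Real.sqrt_nonneg l, Real.sq_sqrt hl0, add_sq √l 1]
  rw [abs_of_nonneg (sub_nonneg.2 (Real.sqrt_le_sqrt hl.2))]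
  linarith

variable {f g l L γ δ : ℝ}

theorem normalized_le_add_of_normalized_le (hl : l ∈ Set.Icc (L - 1) L) (hl0 : 0 < l)
    (hfg : f ≤ g) (hγ : |γ| ≤ δ * √L) (h : (g - l) / √l ≤ γ) : (f - L) / √L ≤ γ + δ := by
  rw [div_le_iff₀ (Real.sqrt_pos.2 hl0)] at h
  rw [div_le_iff₀ (Real.sqrt_pos.2 (hl0.trans_le hl.2))]
  have hshift : γ * (√l - √L) ≤ |γ| := by
    refine (le_abs_self _).trans ?_
    rw [abs_mul, abs_sub_comm]
    exact mul_le_of_le_one_right (abs_nonneg γ) (abs_sqrt_sub_sqrt_le_one hl hl0.le)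
  linarith [hl.2]

theorem normalized_le_of_normalized_le_sub (hl : l ∈ Set.Icc (L - 1) L) (hl0 : 0 < l)
    (hfg : g ≤ f + δ / 2 * √L) (hγ : |γ| + 1 ≤ δ / 2 * √L) (h : (f - L) / √L ≤ γ - δ) :
    (g - l) / √l ≤ γ := by
  rw [div_le_iff₀ (Real.sqrt_pos.2 (hl0.trans_le hl.2))] at h
  rw [div_le_iff₀ (Real.sqrt_pos.2 hl0)]
  have hshift : γ * (√L - √l) ≤ |γ| := by
    refine (le_abs_self _).trans ?_
    rw [abs_mul]
    exact mul_le_of_le_one_right (abs_nonneg γ) (abs_sqrt_sub_sqrt_le_one hl hl0.le)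
  linarith [hl.1]

theorem log_log_mem_Icc {x n : ℝ} (hx : 1 < x) (hxn : x ^ (1 / 2 : ℝ) ≤ n) (hnx : n ≤ x) :
    Real.log (Real.log n) ∈ Set.Icc (Real.log (Real.log x) - 1) (Real.log (Real.log x)) := by
  have hx0 : 0 < x := zero_lt_one.trans hx
  have hlogx : 0 < Real.log x := Real.log_pos hx
  have hlogn : Real.log x / 2 ≤ Real.log n := by
    have := Real.log_le_log (Real.rpow_pos_of_pos hx0 _) hxn
    rw [Real.log_rpow hx0] at this
    linarith
  have hn : 0 < n := (Real.rpow_pos_of_pos hx0 _).trans_le hxn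
  constructor
  · have hlog := Real.log_le_log (half_pos hlogx) hlogn
    rw [Real.log_div hlogx.ne' two_ne_zero] at hlog
    linarith [Real.log_two_lt_d9]
  · exact Real.log_le_log ((half_pos hlogx).trans_le hlogn) (Real.log_le_log hn hnx)

end Normalization

section LogLog

open Asymptotics

variable {M P : Type*} {N : M → ℝ} {dvd : P → M → Prop} {A : ℝ → Finset M} {Q R : ℝ → Finset P}

theorem tendsto_log_log_atTop : Tendsto (fun x ↦ Real.log (Real.log x)) atTop atTop :=
  Real.tendsto_log_atTop.comp Real.tendsto_log_atTop

theorem tendsto_const_mul_sqrt_log_log_atTop {c : ℝ} (hc : 0 < c) :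
    Tendsto (fun x ↦ c * √(Real.log (Real.log x))) atTop atTop :=
  (Real.tendsto_sqrt_atTop.comp tendsto_log_log_atTop).const_mul_atTop hc

theorem tendsto_proportion_le_rpow_or_lt_divisorCount
    (hhalf : Tendsto (fun x ↦ proportion (A x) fun m ↦ N m ≤ x ^ (1 / 2 : ℝ)) atTop (𝓝 0))
    (hR : (fun x ↦ ∑ p ∈ R x, proportion (A x) (dvd p)) =o[atTop]
      fun x ↦ √(Real.log (Real.log x))) {c : ℝ} (hc : 0 < c) :
    Tendsto (fun x ↦ proportion (A x) fun m ↦ N m ≤ x ^ (1 / 2 : ℝ) ∨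
      c * √(Real.log (Real.log x)) < divisorCount dvd (R x) m) atTop (𝓝 0) := by
  have hmarkov : Tendsto (fun x ↦ proportion (A x) fun m ↦
      c * √(Real.log (Real.log x)) < divisorCount dvd (R x) m) atTop (𝓝 0) := by
    have hbound := hR.tendsto_div_nhds_zero.const_mul c⁻¹
    rw [mul_zero] at hbound
    refine squeeze_zero' (.of_forall fun _ ↦ proportion_nonneg _ _) ?_ hbound
    filter_upwards [(tendsto_const_mul_sqrt_log_log_atTop hc).eventually_gt_atTop 0] with x hx
    exact (proportion_lt_divisorCount_le dvd (A x) (R x) hx).trans_eq (by field_simp)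
  refine squeeze_zero (fun _ ↦ proportion_nonneg _ _)
    (fun x ↦ proportion_or_le (A x) (fun m ↦ N m ≤ x ^ (1 / 2 : ℝ)) _) ?_
  simpa using hhalf.add hmarkov

theorem tendsto_proportion_normalized_le {ω : M → ℕ} {F : ℝ → ℝ} {γ C : ℝ} (hF : ContinuousAt F γ)
    (hsmall : ∀ γ, Tendsto (fun x ↦ proportion (A x) fun m ↦
      (divisorCount dvd (Q x) m - Real.log (Real.log x)) / √(Real.log (Real.log x)) ≤ γ)
      atTop (𝓝 (F γ)))
    (hN : ∀ x, ∀ m ∈ A x, N m ≤ x)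
    (hhalf : Tendsto (fun x ↦ proportion (A x) fun m ↦ N m ≤ x ^ (1 / 2 : ℝ)) atTop (𝓝 0))
    (hR : (fun x ↦ ∑ p ∈ R x, proportion (A x) (dvd p)) =o[atTop]
      fun x ↦ √(Real.log (Real.log x)))
    (hω : ∀ᶠ x in atTop, ∀ m ∈ A x, divisorCount dvd (Q x) m ≤ ω m ∧
      (ω m : ℝ) ≤ divisorCount dvd (Q x) m + divisorCount dvd (R x) m + C) :
    Tendsto (fun x ↦ proportion (A x) fun m ↦ 3 ≤ N m ∧
      (ω m - Real.log (Real.log (N m))) / √(Real.log (Real.log (N m))) ≤ γ) atTop (𝓝 (F γ)) := by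
  have hbad {δ : ℝ} (hδ : 0 < δ) := tendsto_proportion_le_rpow_or_lt_divisorCount hhalf hR
    (div_pos hδ four_pos)
  have hlarge {δ : ℝ} (hδ : 0 < δ) : ∀ᶠ x in atTop, |γ| + 1 ≤ δ / 2 * √(Real.log (Real.log x)) ∧
      C ≤ δ / 4 * √(Real.log (Real.log x)) ∧ 2 ≤ Real.log (Real.log x) ∧ 9 ≤ x :=
    ((tendsto_const_mul_sqrt_log_log_atTop (half_pos hδ)).eventually_ge_atTop _).and <|
      ((tendsto_const_mul_sqrt_log_log_atTop (div_pos hδ four_pos)).eventually_ge_atTop C).and <|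
        (tendsto_log_log_atTop.eventually_ge_atTop 2).and (eventually_ge_atTop 9)
  refine tendsto_proportion_of_sandwich hF hsmall (fun δ hδ ↦ ?_) (fun δ hδ ↦ ?_)
  · refine squeeze_zero' (.of_forall fun _ ↦ proportion_nonneg _ _) ?_ (hbad hδ)
    filter_upwards [hω, hlarge hδ] with x hωx ⟨hγ, _, hL, hx⟩
    refine proportion_mono fun m hm hnot ↦ ?_
    contrapose! hnot
    rintro ⟨-, hle⟩
    have hl := log_log_mem_Icc (by linarith) hnot.1.le (hN x m hm)
    exact normalized_le_add_of_normalized_le hl (by linarith [hl.1])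
      (mod_cast (hωx m hm).1) (by linarith [abs_nonneg γ]) hle
  · refine squeeze_zero' (.of_forall fun _ ↦ proportion_nonneg _ _) ?_ (hbad hδ)
    filter_upwards [hω, hlarge hδ] with x hωx ⟨hγ, hC, hL, hx⟩
    refine proportion_mono fun m hm hnot ↦ ?_
    contrapose! hnot
    intro hle
    have hl := log_log_mem_Icc (by linarith) hnot.1.le (hN x m hm)
    refine ⟨?_, normalized_le_of_normalized_le_sub hl (by linarith [hl.1])
      (by linarith [(hωx m hm).2, hnot.2]) hγ hle⟩
    have hsqrt : (3 : ℝ) ≤ x ^ (1 / 2 : ℝ) := by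
      rw [← Real.sqrt_eq_rpow]
      exact Real.le_sqrt_of_sq_le (by linarith)
    exact hsqrt.trans hnot.1.le

end LogLog

section Density

open Asymptotics

variable {ι M P : Type*} {l : Filter ι}

theorem tsum_subtype_eq_sum {κ : Type*} {q : κ → Prop} {s : Finset κ} (hs : ∀ p, p ∈ s ↔ q p)
    (f : κ → ℝ) : ∑' p : {p // q p}, f p = ∑ p ∈ s, f p := by
  obtain rfl : (· ∈ s) = q := funext fun p ↦ propext (hs p)
  exact Finset.tsum_subtype s f

theorem proportion_eq_card_div_card {A : Finset M} {r : M → Prop} (hA : ∀ m, m ∈ A ↔ r m)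
    (q : M → Prop) : proportion A q = Nat.card {m // r m ∧ q m} / Nat.card {m // r m} := by
  classical
  rw [proportion_eq_card_filter_div, Nat.subtype_card A hA,
    Nat.subtype_card {m ∈ A | q m} fun m ↦ by rw [Finset.mem_filter, hA]]

theorem isBigO_sqrt_self {L : ι → ℝ} (hL : Tendsto L l atTop) : (fun i ↦ √(L i)) =O[l] L := by
  refine .of_bound 1 ?_
  filter_upwards [hL.eventually_ge_atTop 1] with i hi
  rw [one_mul, Real.norm_of_nonneg (Real.sqrt_nonneg _), Real.norm_of_nonneg (by linarith)]
  exact Real.sqrt_le_iff.2 ⟨by linarith, le_self_pow₀ hi two_ne_zero⟩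

theorem tendsto_atTop_of_sub_isLittleO_sqrt {L f : ι → ℝ} (hL : Tendsto L l atTop)
    (hf : (fun i ↦ f i - L i) =o[l] fun i ↦ √(L i)) : Tendsto f l atTop :=
  (show L ~[l] f from (IsEquivalent.symm (hf.trans_isBigO (isBigO_sqrt_self hL)))).tendsto_atTop hL

theorem superpolynomialDecay_of_isLittleO_rpow {L f : ι → ℝ} (hL : Tendsto L l atTop) {u : ℕ}
    (hf : ∀ r : ℕ, u ≤ r → f =o[l] fun i ↦ L i ^ (-(r : ℝ) / 2)) :
    SuperpolynomialDecay l L f := fun n ↦ by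
  refine (isLittleO_one_iff ℝ).1 ?_
  refine ((isBigO_refl (fun i ↦ L i ^ n) l).mul_isLittleO
    (hf (2 * (n + u)) (by omega))).trans_isBigO (.of_bound 1 ?_)
  filter_upwards [hL.eventually_ge_atTop 1] with i hi
  have hpow : L i ^ n * L i ^ (-((2 * (n + u) : ℕ) : ℝ) / 2) = (L i ^ u)⁻¹ := by
    have hL0 : 0 < L i := by linarith
    rw [← Real.rpow_natCast, ← Real.rpow_natCast, ← Real.rpow_neg hL0.le, ← Real.rpow_add hL0]
    congr 1
    push_cast
    ring
  rw [hpow, norm_inv, norm_pow, norm_one, mul_one, Real.norm_of_nonneg (by linarith)]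
  exact inv_le_one_of_one_le₀ (one_le_pow₀ hi)

theorem frequently_not_subset_of_tendsto_sum_atTop [l.NeBot] {Q : ι → Finset P} {f : P → ℝ}
    (hsum : Tendsto (fun i ↦ ∑ p ∈ Q i, f p) l atTop) (s : Finset P) :
    ∃ᶠ i in l, ¬Q i ⊆ s := by
  intro hsub
  obtain ⟨i, hi, hsi⟩ := ((hsum.eventually_gt_atTop (∑ p ∈ s, |f p|)).and hsub).exists
  rw [not_not] at hsi
  refine hi.not_ge ?_
  exact (Finset.sum_le_sum fun p _ ↦ le_abs_self (f p)).trans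
    (Finset.sum_le_sum_of_subset_of_nonneg hsi fun _ _ _ ↦ abs_nonneg _)

variable {A : ι → Finset M} {Q R : ι → Finset P} {dvd : P → M → Prop} {lam : P → ℝ}

theorem mem_Icc_of_tendsto_sum_atTop [l.NeBot] {primes : Set P} {ν : P → ℝ} {y : ι → ℝ}
    (hprimes : ∀ c, {p | p ∈ primes ∧ ν p ≤ c}.Finite)
    (hQ : ∀ i p, p ∈ Q i ↔ p ∈ primes ∧ ν p ≤ y i)
    (hsum : Tendsto (fun i ↦ ∑ p ∈ Q i, lam p) l atTop)
    (hdens : Tendsto (fun i ↦ ∑ p ∈ Q i, |proportion (A i) (dvd p) - lam p|) l (𝓝 0))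
    {p : P} (hp : p ∈ primes) : lam p ∈ Set.Icc (0 : ℝ) 1 := by
  refine mem_Icc_of_tendsto_sum_abs_proportion_sub hdens ?_
  refine (frequently_not_subset_of_tendsto_sum_atTop hsum (hprimes (ν p)).toFinset).mono
    fun i hi ↦ ?_
  obtain ⟨p', hp'Q, hp'⟩ := Finset.not_subset.1 hi
  rw [Set.Finite.mem_toFinset, Set.mem_ofPred_eq, not_and, not_le] at hp'
  rw [hQ] at hp'Q ⊢
  exact ⟨hp, (hp' hp'Q.1).le.trans hp'Q.2⟩

theorem isLittleO_sum_proportion {e : P → ι → ℝ} {g : ι → ℝ}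
    (hdens : ∀ i, ∀ p ∈ R i, proportion (A i) (dvd p) = lam p + e p i)
    (hlam : (fun i ↦ ∑ p ∈ R i, lam p) =o[l] g) (he : (fun i ↦ ∑ p ∈ R i, |e p i|) =o[l] g) :
    (fun i ↦ ∑ p ∈ R i, proportion (A i) (dvd p)) =o[l] g := by
  have he' : (fun i ↦ ∑ p ∈ R i, e p i) =o[l] g :=
    IsBigO.trans_isLittleO (.of_norm_le fun i ↦ norm_sum_le _ _) he
  refine (hlam.add he').congr_left fun i ↦ ?_
  rw [← Finset.sum_add_distrib]
  exact Finset.sum_congr rfl fun p hp ↦ (hdens i p hp).symm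

theorem superpolynomialDecay_sum_abs_proportion_sub {L : ι → ℝ} (hA : ∀ᶠ i in l, (A i).Nonempty)
    {e : Finset P → ι → ℝ}
    (hdens : ∀ i, ∀ T ⊆ Q i, proportion (A i) (fun m ↦ ∀ p ∈ T, dvd p m) = ∏ p ∈ T, lam p + e T i)
    (he : ∀ u, 1 ≤ u → SuperpolynomialDecay l L fun i ↦ ∑ T ∈ (Q i).powersetCard u, |e T i|)
    (u : ℕ) :
    SuperpolynomialDecay l L fun i ↦ ∑ T ∈ (Q i).powersetCard u,
      |proportion (A i) (fun m ↦ ∀ p ∈ T, dvd p m) - ∏ p ∈ T, lam p| := by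
  rcases u.eq_zero_or_pos with rfl | hu
  · refine (superpolynomialDecay_zero l L).congr' (hA.mono fun i hi ↦ ?_)
    simp [proportion, hi.card_ne_zero]
  · refine (he u hu).congr fun i ↦ Finset.sum_congr rfl fun T hT ↦ ?_
    rw [hdens i T (Finset.mem_powersetCard.1 hT).1, add_sub_cancel_left]

theorem tendsto_proportion_le_rpow {S : Set M} {N : M → ℝ} {A : ℝ → Finset M}
    (hA : ∀ x m, m ∈ A x ↔ m ∈ S ∧ N m ≤ x)
    (hhalf : (fun x : ℝ ↦ (Nat.card {m // m ∈ S ∧ N m ≤ x ^ (1 / 2 : ℝ)} : ℝ)) =o[atTop]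
      fun x ↦ (Nat.card {m // m ∈ S ∧ N m ≤ x} : ℝ)) :
    Tendsto (fun x ↦ proportion (A x) fun m ↦ N m ≤ x ^ (1 / 2 : ℝ)) atTop (𝓝 0) := by
  refine squeeze_zero (fun _ ↦ proportion_nonneg _ _) (fun x ↦ ?_) hhalf.tendsto_div_nhds_zero
  classical
  rw [proportion_eq_card_filter_div, Nat.subtype_card _ (hA x),
    Nat.subtype_card _ (hA (x ^ (1 / 2 : ℝ)))]
  gcongr ((?_ : ℕ) : ℝ) / _
  refine Finset.card_le_card fun m hm ↦ ?_
  rw [Finset.mem_filter, hA] at hm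
  exact (hA _ m).2 ⟨hm.1.1, hm.2⟩

theorem divisorCount_le_card_and_card_le {Q R : Finset P} {primes : Set P} {ν : P → ℝ} {y z : ℝ}
    (hQ : ∀ p, p ∈ Q ↔ p ∈ primes ∧ ν p ≤ y)
    (hR : ∀ p, p ∈ R ↔ p ∈ primes ∧ y < ν p ∧ ν p ≤ z) {m : M}
    (hm : {p | p ∈ primes ∧ dvd p m}.Finite) :
    divisorCount dvd Q m ≤ Nat.card {p // p ∈ primes ∧ dvd p m} ∧
      Nat.card {p // p ∈ primes ∧ dvd p m} ≤ divisorCount dvd Q m + divisorCount dvd R m +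
        Nat.card {p // p ∈ primes ∧ z < ν p ∧ dvd p m} := by
  classical
  have hall : Nat.card {p // p ∈ primes ∧ dvd p m} = hm.toFinset.card :=
    Nat.subtype_card _ fun p ↦ by simp
  have hlarge : Nat.card {p // p ∈ primes ∧ z < ν p ∧ dvd p m} =
      {p ∈ hm.toFinset | z < ν p}.card := Nat.subtype_card _ fun p ↦ by
        simp only [Finset.mem_filter, Set.Finite.mem_toFinset, Set.mem_ofPred_eq]
        tauto
  rw [hall, hlarge, divisorCount, divisorCount]
  refine ⟨Finset.card_le_card fun p hp ↦ ?_, ?_⟩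
  · simp only [Finset.mem_filter, hQ] at hp
    simpa using ⟨hp.1.1, hp.2⟩
  · refine (Finset.card_le_card fun p hp ↦ ?_).trans
      ((Finset.card_union_le _ _).trans (Nat.add_le_add_right (Finset.card_union_le _ _) _))
    simp only [Set.Finite.mem_toFinset, Set.mem_ofPred_eq] at hp
    simp only [Finset.mem_union, Finset.mem_filter, hQ, hR, Set.Finite.mem_toFinset,
      Set.mem_ofPred_eq]
    grind

end Density

section ErdosKac

open Asymptotics

theorem erdosKac_subset_numberField_general {M P : Type*} {S : Set M} {N : M → ℝ}
    {primes : Set P} {ν : P → ℝ} {dvd : P → M → Prop} (hSne : S.Nonempty)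
    (hS : ∀ x, {m | m ∈ S ∧ N m ≤ x}.Finite)
    (hprimes : ∀ x, {p | p ∈ primes ∧ ν p ≤ x}.Finite)
    (hdvd : ∀ m ∈ S, {p | p ∈ primes ∧ dvd p m}.Finite)
    (hShalf : (fun x : ℝ ↦ (Nat.card {m // m ∈ S ∧ N m ≤ x ^ ((1 : ℝ) / 2)} : ℝ)) =o[atTop]
      fun x ↦ (Nat.card {m // m ∈ S ∧ N m ≤ x} : ℝ))
    {y z : ℝ → ℝ} {lam : P → ℝ} {e : Finset P → ℝ → ℝ}
    (hdensity : ∀ T : Finset P, (∀ p ∈ T, p ∈ primes) → ∀ x : ℝ,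
      (Nat.card {m // m ∈ S ∧ N m ≤ x ∧ ∀ p ∈ T, dvd p m} : ℝ) /
        Nat.card {m // m ∈ S ∧ N m ≤ x} = ∏ p ∈ T, lam p + e T x)
    (ha : ∃ C : ℝ, ∀ᶠ x in atTop, ∀ m ∈ S, N m ≤ x →
      (Nat.card {p // p ∈ primes ∧ z x < ν p ∧ dvd p m} : ℝ) ≤ C)
    (hb : (fun x ↦ ∑' p : {p // p ∈ primes ∧ y x < ν p ∧ ν p ≤ z x}, lam p.1) =o[atTop]
      fun x ↦ √(Real.log (Real.log x)))
    (hc : (fun x ↦ ∑' p : {p // p ∈ primes ∧ y x < ν p ∧ ν p ≤ z x}, |e {p.1} x|) =o[atTop]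
      fun x ↦ √(Real.log (Real.log x)))
    (hd : (fun x ↦ (∑' p : {p // p ∈ primes ∧ ν p ≤ y x}, lam p.1) - Real.log (Real.log x))
      =o[atTop] fun x ↦ √(Real.log (Real.log x)))
    (he : (fun x ↦ ∑' p : {p // p ∈ primes ∧ ν p ≤ y x}, lam p.1 ^ 2) =o[atTop]
      fun x ↦ Real.log (Real.log x))
    (hf : ∀ u, 1 ≤ u → SuperpolynomialDecay atTop (fun x ↦ Real.log (Real.log x)) fun x ↦
      ∑' T : {T : Finset P // T.card = u ∧ ∀ p ∈ T, p ∈ primes ∧ ν p ≤ y x}, |e T.1 x|)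
    (γ : ℝ) :
    Tendsto (fun x : ℝ ↦ (Nat.card {m // m ∈ S ∧ N m ≤ x ∧ 3 ≤ N m ∧
        ((Nat.card {p // p ∈ primes ∧ dvd p m} : ℝ) - Real.log (Real.log (N m))) /
          √(Real.log (Real.log (N m))) ≤ γ} : ℝ) /
      Nat.card {m // m ∈ S ∧ N m ≤ x}) atTop (𝓝 (gaussPhi γ)) := by
  obtain ⟨A, hA⟩ : ∃ A : ℝ → Finset M, ∀ x m, m ∈ A x ↔ m ∈ S ∧ N m ≤ x :=
    ⟨fun x ↦ (hS x).toFinset, by simp⟩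
  obtain ⟨Q, hQ⟩ : ∃ Q : ℝ → Finset P, ∀ x p, p ∈ Q x ↔ p ∈ primes ∧ ν p ≤ y x :=
    ⟨fun x ↦ (hprimes (y x)).toFinset, by simp⟩
  obtain ⟨R, hR⟩ : ∃ R : ℝ → Finset P, ∀ x p, p ∈ R x ↔ p ∈ primes ∧ y x < ν p ∧ ν p ≤ z x :=
    ⟨fun x ↦ ((hprimes (z x)).inter_of_left {p | y x < ν p}).toFinset, by
      simp only [Set.Finite.mem_toFinset, Set.mem_inter_iff, Set.mem_ofPred_eq]
      grind⟩
  have hQcard (u : ℕ) (x : ℝ) (T : Finset P) : T ∈ (Q x).powersetCard u ↔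
      T.card = u ∧ ∀ p ∈ T, p ∈ primes ∧ ν p ≤ y x := by
    simp only [Finset.mem_powersetCard, Finset.subset_iff, hQ, and_comm]
  simp only [fun x ↦ tsum_subtype_eq_sum (hR x) lam] at hb
  simp only [fun x ↦ tsum_subtype_eq_sum (hR x) fun p ↦ |e {p} x|] at hc
  simp only [fun x ↦ tsum_subtype_eq_sum (hQ x) lam] at hd
  simp only [fun x ↦ tsum_subtype_eq_sum (hQ x) fun p ↦ lam p ^ 2] at he
  simp only [fun u x ↦ tsum_subtype_eq_sum (hQcard u x) fun T ↦ |e T x|] at hf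
  simp only [← and_assoc (a := _ ∈ S), ← proportion_eq_card_div_card (hA _)] at hdensity ⊢
  have hAne : ∀ᶠ x in atTop, (A x).Nonempty := by
    obtain ⟨m, hm⟩ := hSne
    filter_upwards [eventually_ge_atTop (N m)] with x hx using ⟨m, (hA x m).2 ⟨hm, hx⟩⟩
  have hcorr := superpolynomialDecay_sum_abs_proportion_sub hAne
    (fun x T hT ↦ hdensity T (fun p hp ↦ ((hQ x p).1 (hT hp)).1) x) hf
  have hlam : ∀ᶠ x in atTop, ∀ p ∈ Q x, lam p ∈ Set.Icc (0 : ℝ) 1 := .of_forall fun x p hp ↦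
    mem_Icc_of_tendsto_sum_atTop hprimes hQ
      (tendsto_atTop_of_sub_isLittleO_sqrt tendsto_log_log_atTop hd)
      (by simpa [Finset.powersetCard_one] using hcorr 1 0) ((hQ x p).1 hp).1
  obtain ⟨C, hC⟩ := ha
  refine tendsto_proportion_normalized_le continuous_gaussPhi.continuousAt
    (tendsto_proportion_normalized_divisorCount_le hAne tendsto_log_log_atTop hlam hd he hcorr)
    (fun x m hm ↦ ((hA x m).1 hm).2) (tendsto_proportion_le_rpow hA hShalf)
    (isLittleO_sum_proportion (e := fun p ↦ e {p})
      (fun x p hp ↦ by simpa using hdensity {p} (by simpa using ((hR x p).1 hp).1) x) hb hc)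
    (C := C) (hC.mono fun x hCx m hm ↦ ?_)
  rw [hA] at hm
  obtain ⟨hlower, hupper⟩ := divisorCount_le_card_and_card_le (hQ x) (hR x) (hdvd m hm.1)
  exact ⟨hlower, (Nat.cast_le.2 hupper).trans (by push_cast; linarith [hCx m hm.1 hm.2])⟩

end ErdosKac

section Ideals

theorem finite_setOf_dvd {M : Type*} [CommMonoidWithZero M] [UniqueFactorizationMonoid M]
    [Finite Mˣ] {m : M} (hm : m ≠ 0) : {a | a ∣ m}.Finite :=
  have := Fintype.ofFinite Mˣ
  @Finite.of_fintype _ (UniqueFactorizationMonoid.fintypeSubtypeDvd m hm)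

theorem finite_setOf_absNorm_cast_le (R : Type*) [CommRing R] [IsDedekindDomain R]
    [Module.Free ℤ R] [Module.Finite ℤ R] [CharZero R] (x : ℝ) :
    {I : Ideal R | (Ideal.absNorm I : ℝ) ≤ x}.Finite :=
  (Ideal.finite_setOfPred_absNorm_le ⌊x⌋₊).subset fun _ hI ↦ Nat.le_floor hI

end Ideals

/-- **The Erdős–Kac theorem for subsets of the ideals of a number field.**
`S` is a set of nonzero ideals, infinite, with `|S(√x)| = o(|S(x)|)`; `λ_p` are real
constants and, for a finite set `T` of distinct prime ideals, `e T x` is defined by the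
density relation `|{m ∈ S(x) : p ∣ m ∀ p ∈ T}|/|S(x)| = ∏_{p ∈ T} λ_p + e T x`.
Under conditions (a)–(f), `(ω(m) - log log N(m))/√(log log N(m))` obeys the Gaussian
distribution on `S`. -/
theorem erdosKac_subset_numberField
    (S : Set (Ideal (NumberField.RingOfIntegers K)))
    (hS0 : 0 ∉ S) (hSinf : S.Infinite)
    (hShalf : (fun x : ℝ => (countS K S (x ^ ((1 : ℝ)/2)) : ℝ)) =o[atTop]
      fun x : ℝ => (countS K S x : ℝ))
    (β : ℝ) (hβ0 : 0 < β) (hβ1 : β ≤ 1)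
    (y : ℝ → ℝ) (hy : ∀ x : ℝ, 1 < x → 1 < y x ∧ y x < x ^ β)
    (lam : Ideal (NumberField.RingOfIntegers K) → ℝ)
    (e : Finset (Ideal (NumberField.RingOfIntegers K)) → ℝ → ℝ)
    (hdensity : ∀ T : Finset (Ideal (NumberField.RingOfIntegers K)),
      (∀ p ∈ T, p.IsPrime) → ∀ x : ℝ,
      (Nat.card {m : Ideal (NumberField.RingOfIntegers K) //
          m ∈ S ∧ (Ideal.absNorm m : ℝ) ≤ x ∧ ∀ p ∈ T, p ∣ m} : ℝ) /
        (countS K S x : ℝ) = (∏ p ∈ T, lam p) + e T x)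
    -- condition (a)
    (ha : ∃ C : ℝ, ∀ x : ℝ, 1 < x → ∀ m ∈ S, (Ideal.absNorm m : ℝ) ≤ x →
      (Nat.card {p : Ideal (NumberField.RingOfIntegers K) //
        p.IsPrime ∧ x ^ β < (Ideal.absNorm p : ℝ) ∧ p ∣ m} : ℝ) ≤ C)
    -- condition (b)
    (hb : (fun x : ℝ => ∑' p : {p : Ideal (NumberField.RingOfIntegers K) //
        p.IsPrime ∧ y x < (Ideal.absNorm p : ℝ) ∧ (Ideal.absNorm p : ℝ) ≤ x ^ β}, lam p.1)
      =o[atTop] fun x : ℝ => Real.sqrt (Real.log (Real.log x)))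
    -- condition (c)
    (hc : (fun x : ℝ => ∑' p : {p : Ideal (NumberField.RingOfIntegers K) //
        p.IsPrime ∧ y x < (Ideal.absNorm p : ℝ) ∧ (Ideal.absNorm p : ℝ) ≤ x ^ β}, |e {p.1} x|)
      =o[atTop] fun x : ℝ => Real.sqrt (Real.log (Real.log x)))
    -- condition (d)
    (hd : (fun x : ℝ => (∑' p : {p : Ideal (NumberField.RingOfIntegers K) //
        p.IsPrime ∧ (Ideal.absNorm p : ℝ) ≤ y x}, lam p.1) - Real.log (Real.log x))
      =o[atTop] fun x : ℝ => Real.sqrt (Real.log (Real.log x)))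
    -- condition (e)
    (he : (fun x : ℝ => ∑' p : {p : Ideal (NumberField.RingOfIntegers K) //
        p.IsPrime ∧ (Ideal.absNorm p : ℝ) ≤ y x}, (lam p.1) ^ 2)
      =o[atTop] fun x : ℝ => Real.sqrt (Real.log (Real.log x)))
    -- condition (f)
    (hf : ∀ r u : ℕ, 1 ≤ u → u ≤ r →
      (fun x : ℝ => ∑' T : {T : Finset (Ideal (NumberField.RingOfIntegers K)) //
          T.card = u ∧ ∀ p ∈ T, p.IsPrime ∧ (Ideal.absNorm p : ℝ) ≤ y x}, |e T.1 x|)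
        =o[atTop] fun x : ℝ => Real.log (Real.log x) ^ (-(r : ℝ)/2))
    (γ : ℝ) :
    Tendsto (fun x : ℝ =>
      (Nat.card {m : Ideal (NumberField.RingOfIntegers K) //
          m ∈ S ∧ (Ideal.absNorm m : ℝ) ≤ x ∧ 3 ≤ Ideal.absNorm m ∧
          ((omegaI K m : ℝ) - Real.log (Real.log (Ideal.absNorm m))) /
            Real.sqrt (Real.log (Real.log (Ideal.absNorm m))) ≤ γ} : ℝ) /
        (countS K S x : ℝ)) atTop (𝓝 (gaussPhi γ)) := by
  obtain ⟨C, hC⟩ := ha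
  have hnorm (x : ℝ) := finite_setOf_absNorm_cast_le (NumberField.RingOfIntegers K) x
  simpa only [Nat.ofNat_le_cast, countS, omegaI, Set.mem_ofPred_eq] using
    erdosKac_subset_numberField_general
    (N := fun m ↦ (Ideal.absNorm m : ℝ)) (primes := {p | p.IsPrime})
    (ν := fun p ↦ (Ideal.absNorm p : ℝ)) (dvd := (· ∣ ·)) (z := fun x ↦ x ^ β)
    hSinf.nonempty (fun x ↦ (hnorm x).inter_of_right S) (fun x ↦ (hnorm x).inter_of_right _)
    (fun m hm ↦ (finite_setOf_dvd (ne_of_mem_of_not_mem hm hS0)).inter_of_right _) hShalf hdensity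
    ⟨C, (eventually_gt_atTop 1).mono hC⟩ hb hc hd
    (he.trans_isBigO (isBigO_sqrt_self tendsto_log_log_atTop))
    (fun u hu ↦ superpolynomialDecay_of_isLittleO_rpow tendsto_log_log_atTop
      fun r hr ↦ hf r u hu hr) γ

end
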